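/- Let b₀ > 0 and let b, ℓ, č, σ_ζ, σ_μ, Δ, φ₁, φ₂, φ₃, γ_ζ, γ_μ, ρ, Θ, k, z, ζ, μ, g be real numbers satisfying: b ≥ b₀, ℓ ≥ č ≥ 1, σ_ζ ≥ 1, σ_μ ≥ 1, φ₁, φ₂, φ₃, γ_ζ, γ_μ ≥ 1, Δ ≥ φ₂ + 1, ρ ≥ γ_ζ + φ₁ + φ₃ + 2, Θ ≥ max{ℓσ_ζ, č}/(2b₀), and g² ≤ č·φ₁·(φ₂·z² + φ₃·ζ²). Then: −ℓ·(Δ·z² − σ_ζ·γ_ζ·ζ² − σ_μ·γ_μ·μ²) + 2ζ·(g − Θ·b·ρ·ζ − k·μ) ≤ −z² − ζ² + (ℓ·σ_μ·γ_μ + k²)·μ². -/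

import Mathlib

/-!
Young's inequality absorbs the drift cross term `2ζg` into `cφ₁ζ² + φ₂z² + φ₃ζ²` and the
disturbance cross term `-2kζμ` into `ζ² + k²μ²`. What is then left to compare are the coefficients
of `z²` and of `ζ²`. In the latter, the threshold on `Θ` says that `2Θb` dominates `max (ℓσζ) c`, a
number which is at least `1`, `c` and `ℓσζ`, so that `2Θbρ` dominates term by term every
contribution that has to be compensated.
-/

section OrderedRing

variable {K : Type*} [CommRing K] [LinearOrder K] [IsStrictOrderedRing K]

lemma two_mul_mul_le_mul_sq_add_of_sq_le_mul {a B x g : K} (ha : 0 ≤ a) (hB : 0 ≤ B)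
    (hg : g ^ 2 ≤ a * B) : 2 * x * g ≤ a * x ^ 2 + B := by
  have hxg : (x * g) ^ 2 ≤ a * x ^ 2 * B :=
    calc (x * g) ^ 2 = x ^ 2 * g ^ 2 := mul_pow x g 2
      _ ≤ x ^ 2 * (a * B) := by gcongr
      _ = a * x ^ 2 * B := by ring
  rw [mul_assoc]
  exact two_mul_le_add_of_sq_le_mul (by positivity) hB hxg

lemma add_le_max_mul {s c γ φ ψ ρ : K} (hc : 1 ≤ c) (hγ : 0 ≤ γ) (hφ : 0 ≤ φ) (hψ : 0 ≤ ψ)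
    (hρ : γ + φ + ψ + 2 ≤ ρ) : s * γ + c * φ + ψ + 2 ≤ max s c * ρ := by
  have hone : 1 ≤ max s c := hc.trans (le_max_right s c)
  calc s * γ + c * φ + ψ + 2 = s * γ + c * φ + 1 * ψ + 1 * 2 := by ring
    _ ≤ max s c * γ + max s c * φ + max s c * ψ + max s c * 2 := by
        gcongr
        exacts [le_max_left s c, le_max_right s c]
    _ = max s c * (γ + φ + ψ + 2) := by ring
    _ ≤ max s c * ρ := by gcongr

end OrderedRing

section OrderedField

variable {K : Type*} [Field K] [LinearOrder K] [IsStrictOrderedRing K]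

lemma le_mul_of_div_le_of_le {a t x y : K} (ha : 0 ≤ a) (hx : 0 < x) (hxy : x ≤ y)
    (h : a / x ≤ t) : a ≤ t * y :=
  (div_le_iff₀ (hx.trans_le hxy)).1 ((div_le_div_of_nonneg_left ha hx hxy).trans h)

theorem stmt9_general {b₀ b ℓ c σζ σμ Δ φ₁ φ₂ φ₃ γζ γμ ρ Θ k z ζ μ g : K}
    (hb₀ : 0 < b₀) (hb : b₀ ≤ b) (hℓc : c ≤ ℓ) (hc : 1 ≤ c)
    (hφ₁ : 0 ≤ φ₁) (hφ₂ : 0 ≤ φ₂) (hφ₃ : 0 ≤ φ₃) (hγζ : 0 ≤ γζ)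
    (hΔ : φ₂ + 1 ≤ Δ) (hρ : γζ + φ₁ + φ₃ + 2 ≤ ρ)
    (hΘ : max (ℓ * σζ) c / (2 * b₀) ≤ Θ)
    (hg : g ^ 2 ≤ c * φ₁ * (φ₂ * z ^ 2 + φ₃ * ζ ^ 2)) :
    -ℓ * (Δ * z ^ 2 - σζ * γζ * ζ ^ 2 - σμ * γμ * μ ^ 2)
        + 2 * ζ * (g - Θ * b * ρ * ζ - k * μ)
      ≤ -z ^ 2 - ζ ^ 2 + (ℓ * σμ * γμ + k ^ 2) * μ ^ 2 := by
  have hc₀ : 0 ≤ c := zero_le_one.trans hc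
  have hdrift : 2 * ζ * g ≤ c * φ₁ * ζ ^ 2 + (φ₂ * z ^ 2 + φ₃ * ζ ^ 2) :=
    two_mul_mul_le_mul_sq_add_of_sq_le_mul (by positivity) (by positivity) hg
  have hdist : 2 * ζ * -(k * μ) ≤ ζ ^ 2 + (-(k * μ)) ^ 2 := two_mul_le_add_sq ζ (-(k * μ))
  have hzcoeff : φ₂ + 1 ≤ ℓ * Δ :=
    hΔ.trans (le_mul_of_one_le_left (by linarith) (hc.trans hℓc))
  have hgain : max (ℓ * σζ) c ≤ Θ * (2 * b) :=
    le_mul_of_div_le_of_le (le_max_of_le_right hc₀) (by positivity) (by gcongr) hΘ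
  have hζcoeff : ℓ * σζ * γζ + c * φ₁ + φ₃ + 2 ≤ Θ * (2 * b) * ρ :=
    (add_le_max_mul hc hγζ hφ₁ hφ₃ hρ).trans (mul_le_mul_of_nonneg_right hgain (by linarith))
  calc -ℓ * (Δ * z ^ 2 - σζ * γζ * ζ ^ 2 - σμ * γμ * μ ^ 2)
        + 2 * ζ * (g - Θ * b * ρ * ζ - k * μ)
      = 2 * ζ * g + 2 * ζ * -(k * μ) + ℓ * σζ * γζ * ζ ^ 2 + ℓ * σμ * γμ * μ ^ 2
          - ℓ * Δ * z ^ 2 - Θ * (2 * b) * ρ * ζ ^ 2 := by ring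
    _ ≤ (c * φ₁ * ζ ^ 2 + (φ₂ * z ^ 2 + φ₃ * ζ ^ 2)) + (ζ ^ 2 + (-(k * μ)) ^ 2)
          + ℓ * σζ * γζ * ζ ^ 2 + ℓ * σμ * γμ * μ ^ 2
          - (φ₂ + 1) * z ^ 2 - (ℓ * σζ * γζ + c * φ₁ + φ₃ + 2) * ζ ^ 2 := by gcongr
    _ = -z ^ 2 - ζ ^ 2 + (ℓ * σμ * γμ + k ^ 2) * μ ^ 2 := by ring

end OrderedField

/-- the algebraic estimate underlying Step 1 of the proof of
Theorem 1 (adaptive high-gain design). -/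
theorem stmt9 (b₀ b ℓ c σζ σμ Δ φ₁ φ₂ φ₃ γζ γμ ρ Θ k z ζ μ g : ℝ)
    (hb₀ : 0 < b₀) (hb : b₀ ≤ b)
    (hℓc : c ≤ ℓ) (hc : 1 ≤ c)
    (hσζ : 1 ≤ σζ) (hσμ : 1 ≤ σμ)
    (hφ₁ : 1 ≤ φ₁) (hφ₂ : 1 ≤ φ₂) (hφ₃ : 1 ≤ φ₃)
    (hγζ : 1 ≤ γζ) (hγμ : 1 ≤ γμ)
    (hΔ : φ₂ + 1 ≤ Δ)
    (hρ : γζ + φ₁ + φ₃ + 2 ≤ ρ)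
    (hΘ : max (ℓ * σζ) c / (2 * b₀) ≤ Θ)
    (hg : g ^ 2 ≤ c * φ₁ * (φ₂ * z ^ 2 + φ₃ * ζ ^ 2)) :
    -ℓ * (Δ * z ^ 2 - σζ * γζ * ζ ^ 2 - σμ * γμ * μ ^ 2)
        + 2 * ζ * (g - Θ * b * ρ * ζ - k * μ)
      ≤ -z ^ 2 - ζ ^ 2 + (ℓ * σμ * γμ + k ^ 2) * μ ^ 2 :=
  stmt9_general hb₀ hb hℓc hc (zero_le_one.trans hφ₁) (zero_le_one.trans hφ₂)
    (zero_le_one.trans hφ₃) (zero_le_one.trans hγζ) hΔ hρ hΘ hg
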